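/- For every fixed positive rational number r, the major arithmetic factor satisfies log A₁(B) = (½·ζ(2)ζ(3)/ζ(6) + o(1))·(2r+1)·B²·log B as B → ∞; equivalently, lim_{B→∞} (∑_{b: φ(b) ≤ B} φ(b)·log b) / (B²·log B) = ζ(2)ζ(3)/(2ζ(6)). -/

import Mathlib

open Filter Real

/-- The real value of the Riemann zeta function at a natural number argument. -/
noncomputable def zetaR (k : ℕ) : ℝ := (riemannZeta k).re

/-- The denominator set `Ψ_B`: positive integers whose totient is at most `B`. -/
def PsiSet (B : ℝ) : Set ℕ := {b : ℕ | 0 < b ∧ (Nat.totient b : ℝ) ≤ B}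

/-!
Write `C = ζ(2) ζ(3) / ζ(6) = ∏ₚ (1 + 1 / (p (p - 1)))`. The heart of the matter is Bateman's theorem
that `N(B) = #{n : φ(n) ≤ B}` satisfies `N(B) ~ C B` (`tendsto_card_Psi`); no Tauberian theorem is
needed.

For a cutoff `y` let `W_y(n) = ∏_{p ∣ n, p < y} (1 - 1/p)`. It is periodic in `n`, so counting in
residue classes gives `#{n : n W_y(n) ≤ B} ~ B · mean(1 / W_y) = B · ∏_{p < y} (1 + 1 / (p (p - 1)))`
(`tendsto_card_Q`, `mean_W_inv`). Since `φ(n) ≤ n W_y(n)`, this is a lower bound for `N(B)`. For the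
upper bound, an `n` with `φ(n) ≤ B` satisfies one of the following:
* `n W_y(n) ≤ B / (1 - ε)`, which is counted by the same asymptotic formula;
* `n ≤ T B` and `∑_{p ∣ n, p ≥ y} 1/p > ε`, which holds for `O(T B / (ε y))` integers by a first-moment
  estimate (`bad_card`);
* `n > T B`, which holds for `O(B / T)` integers by a second-moment estimate (`tail_card`): one has
  `n / φ(n) ≤ 2 ∑_{d ∣ n} 1/d`, by Cauchy–Schwarz `(n / φ(n))² ≪ ∑_{d ∣ n} d^(-1/2)`, and hence
  `∑_{n > T B} (B / φ(n))² ≪ B / T`.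

Letting `y`, `T` and `1/ε` tend to infinity suitably gives Bateman's theorem. Partial summation turns
it into `∑_{φ(n) ≤ B} φ(n) ~ C B² / 2`, and the factor `log n` may be replaced by `log B` because
`n^(1-ε) ≪ φ(n) ≤ n` and the terms with `φ(n) ≤ δ B` contribute only a proportion `O(δ²)`.
-/

/-! ### Pointwise bounds for the totient -/

lemma totient_real (n : ℕ) :
    (Nat.totient n : ℝ) = n * ∏ p ∈ n.primeFactors, (1 - (p : ℝ)⁻¹) := by
  have h := congrArg (Rat.cast : ℚ → ℝ) (Nat.totient_eq_mul_prod_factors n)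
  push_cast at h
  exact h

lemma prod_Ioc_one_sub_sq (N : ℕ) (hN : 1 ≤ N) :
    ∏ k ∈ Finset.Ioc 1 N, (1 - ((k : ℝ) ^ 2)⁻¹) = (N + 1) / (2 * N) := by
  induction N, hN using Nat.le_induction with
  | base => norm_num
  | succ n hn ih =>
    rw [Finset.prod_Ioc_succ_top (by omega), ih]
    have : (n : ℝ) ≠ 0 := by positivity
    push_cast
    field_simp
    ring

/-- The product of `1 - 1/p²` over any set of primes stays at least `1/2`, by comparison with the
telescoping product over all integers. -/
lemma half_le_prod (n : ℕ) :
    (1 / 2 : ℝ) ≤ ∏ p ∈ n.primeFactors, (1 - ((p : ℝ) ^ 2)⁻¹) := by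
  rcases Nat.eq_zero_or_pos n with rfl | hn
  · norm_num
  have h01 : ∀ k ∈ Finset.Ioc 1 n, 0 ≤ 1 - ((k : ℝ) ^ 2)⁻¹ := by
    intro k hk
    have : (1 : ℝ) ≤ k := by exact_mod_cast (Finset.mem_Ioc.1 hk).1.le
    have := inv_le_one_of_one_le₀ (one_le_pow₀ this (n := 2))
    linarith
  calc (1 / 2 : ℝ) ≤ (n + 1) / (2 * n) := by
        have : (0 : ℝ) < n := by exact_mod_cast hn
        rw [div_le_div_iff₀ (by norm_num) (by positivity)]
        linarith
    _ = ∏ k ∈ Finset.Ioc 1 n, (1 - ((k : ℝ) ^ 2)⁻¹) := (prod_Ioc_one_sub_sq n hn).symm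
    _ ≤ _ := by
        apply Finset.prod_le_prod_of_subset_of_le_one
        · intro p hp
          exact Finset.mem_Ioc.2 ⟨(Nat.prime_of_mem_primeFactors hp).one_lt,
            Nat.le_of_mem_primeFactors hp⟩
        · exact h01
        · intro k _ _
          have : (0 : ℝ) ≤ ((k : ℝ) ^ 2)⁻¹ := by positivity
          linarith

lemma prod_one_add_inv_le (n : ℕ) (hn : n ≠ 0) :
    ∏ p ∈ n.primeFactors, (1 + (p : ℝ)⁻¹) ≤ ∑ d ∈ n.divisors, (d : ℝ)⁻¹ := by
  rw [Finset.prod_one_add]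
  have hinj : Set.InjOn (fun t : Finset ℕ => ∏ p ∈ t, p)
      (n.primeFactors.powerset : Set (Finset ℕ)) := by
    intro s hs t ht hst
    have key : ∀ u : Finset ℕ, u ∈ n.primeFactors.powerset → (∏ p ∈ u, p).primeFactors = u :=
      fun u hu => Nat.primeFactors_prod
        (fun p hp => Nat.prime_of_mem_primeFactors (Finset.mem_powerset.1 hu hp))
    rw [← key s hs, ← key t ht]
    exact congrArg _ hst
  calc ∑ t ∈ n.primeFactors.powerset, ∏ p ∈ t, (p : ℝ)⁻¹
      = ∑ t ∈ n.primeFactors.powerset, ((∏ p ∈ t, p : ℕ) : ℝ)⁻¹ := by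
        refine Finset.sum_congr rfl fun t _ => ?_
        push_cast
        rw [Finset.prod_inv_distrib]
    _ = ∑ d ∈ n.primeFactors.powerset.image (fun t => ∏ p ∈ t, p), (d : ℝ)⁻¹ := by
        rw [Finset.sum_image hinj]
    _ ≤ _ := by
        apply Finset.sum_le_sum_of_subset_of_nonneg
        · intro d hd
          obtain ⟨t, ht, rfl⟩ := Finset.mem_image.1 hd
          have ht' := Finset.mem_powerset.1 ht
          exact Nat.mem_divisors.2 ⟨Finset.prod_primes_dvd n
            (fun p hp => (Nat.prime_of_mem_primeFactors (ht' hp)).prime)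
            (fun p hp => Nat.dvd_of_mem_primeFactors (ht' hp)), hn⟩
        · intros; positivity

/-- `n / φ(n) ≤ 2 σ(n) / n`. -/
lemma le_two_mul_totient (n : ℕ) :
    (n : ℝ) ≤ 2 * Nat.totient n * ∑ d ∈ n.divisors, (d : ℝ)⁻¹ := by
  rcases eq_or_ne n 0 with rfl | hn
  · simp
  have h1 := prod_one_add_inv_le n hn
  have h2 := half_le_prod n
  have h3 : ∏ p ∈ n.primeFactors, (1 - ((p : ℝ) ^ 2)⁻¹)
      = (∏ p ∈ n.primeFactors, (1 - (p : ℝ)⁻¹)) * ∏ p ∈ n.primeFactors, (1 + (p : ℝ)⁻¹) := by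
    rw [← Finset.prod_mul_distrib]
    refine Finset.prod_congr rfl fun p _ => ?_
    rw [← inv_pow]; ring
  have h4 : (n : ℝ) * (1 / 2) ≤
      n * ((∏ p ∈ n.primeFactors, (1 - (p : ℝ)⁻¹)) * ∏ p ∈ n.primeFactors, (1 + (p : ℝ)⁻¹)) := by
    rw [← h3]; gcongr
  rw [← mul_assoc, ← totient_real] at h4
  have h5 : (Nat.totient n : ℝ) * ∏ p ∈ n.primeFactors, (1 + (p : ℝ)⁻¹)
      ≤ Nat.totient n * ∑ d ∈ n.divisors, (d : ℝ)⁻¹ := by gcongr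
  linarith

lemma le_totient_log (n : ℕ) :
    (n : ℝ) ≤ 2 * Nat.totient n * (1 + Real.log n) := by
  refine (le_two_mul_totient n).trans ?_
  gcongr
  refine le_trans ?_ (harmonic_le_one_add_log n)
  rw [harmonic_eq_sum_Icc]
  push_cast
  apply Finset.sum_le_sum_of_subset_of_nonneg
  · intro d hd
    exact Finset.mem_Icc.2 ⟨Nat.pos_of_mem_divisors hd, Nat.divisor_le hd⟩
  · intros; positivity

/-- For every `ε > 0`, `n^(1-ε) ≤ K φ(n)`; logarithmic form. -/
lemma log_le_totient (ε : ℝ) (hε : 0 < ε) :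
    ∃ K : ℝ, 0 ≤ K ∧ ∀ n : ℕ, 0 < n → (1 - ε) * Real.log n ≤ Real.log (Nat.totient n) + K := by
  refine ⟨Real.log (2 * (1 + 1 / ε)), Real.log_nonneg ?_, fun n hn => ?_⟩
  · have : 0 < 1 / ε := by positivity
    linarith
  have hn1 : (1 : ℝ) ≤ n := by exact_mod_cast hn
  have hn0 : (0 : ℝ) < n := by linarith
  have hφ : (0 : ℝ) < Nat.totient n := by exact_mod_cast Nat.totient_pos.2 hn
  have hp : 1 ≤ (n : ℝ) ^ ε := Real.one_le_rpow hn1 hε.le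
  have hlog : 1 + Real.log n ≤ (1 + 1 / ε) * (n : ℝ) ^ ε := by
    have := Real.log_le_rpow_div hn0.le hε
    have e : (n : ℝ) ^ ε / ε = 1 / ε * (n : ℝ) ^ ε := by ring
    rw [e] at this
    linarith
  have h : (n : ℝ) ≤ Nat.totient n * (2 * (1 + 1 / ε)) * (n : ℝ) ^ ε :=
    calc (n : ℝ) ≤ 2 * Nat.totient n * (1 + Real.log n) := le_totient_log n
      _ ≤ 2 * Nat.totient n * ((1 + 1 / ε) * (n : ℝ) ^ ε) := by gcongr
      _ = _ := by ring
  have h' := Real.log_le_log hn0 h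
  rw [Real.log_mul (by positivity) (by positivity), Real.log_mul (by positivity) (by positivity),
    Real.log_rpow hn0] at h'
  linarith

lemma PsiSet_finite (B : ℝ) : (PsiSet B).Finite := by
  obtain ⟨K, hK, h⟩ := log_le_totient (1 / 2) (by norm_num)
  refine (Set.finite_Iic ⌊Real.exp (2 * (Real.log B + K))⌋₊).subset ?_
  rintro n ⟨hn, hB⟩
  have hφ : (0 : ℝ) < Nat.totient n := by exact_mod_cast Nat.totient_pos.2 hn
  have hn0 : (0 : ℝ) < n := by exact_mod_cast hn
  have h1 := h n hn
  have h2 := Real.log_le_log hφ hB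
  refine Nat.le_floor ?_
  rw [← Real.log_le_iff_le_exp hn0]
  linarith

/-- The finite set `Ψ_B` as a `Finset`. -/
noncomputable def Psi (B : ℝ) : Finset ℕ := (PsiSet_finite B).toFinset

lemma mem_Psi {B : ℝ} {n : ℕ} : n ∈ Psi B ↔ 0 < n ∧ (Nat.totient n : ℝ) ≤ B := by
  simp [Psi, PsiSet]

/-! ### Integers with small totient that are far beyond `B` -/

lemma summable_three_half : Summable (fun d : ℕ => ((d : ℝ) ^ (3 / 2 : ℝ))⁻¹) :=
  Real.summable_nat_rpow_inv.2 (by norm_num)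

/-- The constant `ζ(3/2)`. -/
noncomputable def Z32 : ℝ := ∑' d : ℕ, ((d : ℝ) ^ (3 / 2 : ℝ))⁻¹

lemma Z32_nonneg : 0 ≤ Z32 := tsum_nonneg fun _ => by positivity

lemma sum_le_Z32 (s : Finset ℕ) : ∑ d ∈ s, ((d : ℝ) ^ (3 / 2 : ℝ))⁻¹ ≤ Z32 :=
  summable_three_half.sum_le_tsum s (fun _ _ => by positivity)

/-- Cauchy–Schwarz applied to the divisor sum bounding `n / φ(n)`, which linearises its square. -/
lemma sq_le_totient_sq (n : ℕ) :
    (n : ℝ) ^ 2 ≤ 4 * Z32 * (Nat.totient n : ℝ) ^ 2 *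
      ∑ d ∈ n.divisors, ((d : ℝ) ^ (1 / 2 : ℝ))⁻¹ := by
  have h1 := le_two_mul_totient n
  have h2 : (∑ d ∈ n.divisors, (d : ℝ)⁻¹) ^ 2 ≤
      (∑ d ∈ n.divisors, ((d : ℝ) ^ (3 / 2 : ℝ))⁻¹) *
        ∑ d ∈ n.divisors, ((d : ℝ) ^ (1 / 2 : ℝ))⁻¹ := by
    apply Finset.sum_sq_le_sum_mul_sum_of_sq_le_mul
    · intros; positivity
    · intros; positivity
    · intro d hd
      have : (0 : ℝ) < d := by exact_mod_cast Nat.pos_of_mem_divisors hd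
      refine le_of_eq ?_
      rw [← mul_inv, ← Real.rpow_add this, inv_pow]
      norm_num
  have h0 : 0 ≤ ∑ d ∈ n.divisors, ((d : ℝ) ^ (1 / 2 : ℝ))⁻¹ :=
    Finset.sum_nonneg fun _ _ => by positivity
  calc (n : ℝ) ^ 2 ≤ (2 * Nat.totient n * ∑ d ∈ n.divisors, (d : ℝ)⁻¹) ^ 2 := by gcongr
    _ = 4 * (Nat.totient n : ℝ) ^ 2 * (∑ d ∈ n.divisors, (d : ℝ)⁻¹) ^ 2 := by ring
    _ ≤ 4 * (Nat.totient n : ℝ) ^ 2 * (Z32 * ∑ d ∈ n.divisors, ((d : ℝ) ^ (1 / 2 : ℝ))⁻¹) := by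
        gcongr
        refine h2.trans ?_
        gcongr
        exact sum_le_Z32 _
    _ = _ := by ring

lemma sum_multiples_inv_sq (M N d : ℕ) (hd : 0 < d) :
    ∑ n ∈ Finset.Ioc M N with d ∣ n, ((n : ℝ) ^ 2)⁻¹ ≤ (d : ℝ)⁻¹ * (2 / (M + 1)) := by
  have hd' : (0 : ℝ) < d := by exact_mod_cast hd
  have hsub : (Finset.Ioc M N).filter (d ∣ ·) ⊆
      (Finset.Ioo (M / d) (N / d + 1)).image (d * ·) := by
    intro n hn
    obtain ⟨hn, m, rfl⟩ := Finset.mem_filter.1 hn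
    rw [Finset.mem_Ioc] at hn
    refine Finset.mem_image.2 ⟨m, Finset.mem_Ioo.2 ⟨?_, ?_⟩, rfl⟩
    · rw [Nat.div_lt_iff_lt_mul hd]; linarith [mul_comm d m]
    · rw [Nat.lt_succ_iff, Nat.le_div_iff_mul_le hd]; linarith [mul_comm d m]
  calc _ ≤ ∑ n ∈ (Finset.Ioo (M / d) (N / d + 1)).image (d * ·), ((n : ℝ) ^ 2)⁻¹ :=
        Finset.sum_le_sum_of_subset_of_nonneg hsub (by intros; positivity)
    _ = ((d : ℝ) ^ 2)⁻¹ * ∑ m ∈ Finset.Ioo (M / d) (N / d + 1), ((m : ℝ) ^ 2)⁻¹ := by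
        rw [Finset.sum_image (fun a _ b _ h => Nat.eq_of_mul_eq_mul_left hd h), Finset.mul_sum]
        refine Finset.sum_congr rfl fun m _ => ?_
        push_cast
        rw [mul_pow, mul_inv]
    _ ≤ ((d : ℝ) ^ 2)⁻¹ * (2 / ((M / d : ℕ) + 1)) := by
        gcongr
        exact sum_Ioo_inv_sq_le _ _
    _ ≤ ((d : ℝ) ^ 2)⁻¹ * (2 / ((M + 1) / d)) := by
        gcongr
        rw [div_le_iff₀ hd']
        have := Nat.lt_div_mul_add hd (a := M)
        have h2 : M + 1 ≤ (M / d + 1) * d := by linarith [add_mul (M / d) 1 d]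
        exact_mod_cast h2
    _ = _ := by field_simp

lemma tail_sum (M N : ℕ) :
    ∑ n ∈ Finset.Ioc M N, ((n : ℝ) ^ 2)⁻¹ * ∑ d ∈ n.divisors, ((d : ℝ) ^ (1 / 2 : ℝ))⁻¹ ≤
      Z32 * (2 / (M + 1)) := by
  have e : ∀ n ∈ Finset.Ioc M N,
      ((n : ℝ) ^ 2)⁻¹ * ∑ d ∈ n.divisors, ((d : ℝ) ^ (1 / 2 : ℝ))⁻¹ =
      ∑ d ∈ Finset.Icc 1 N, if d ∣ n then ((d : ℝ) ^ (1 / 2 : ℝ))⁻¹ * ((n : ℝ) ^ 2)⁻¹ else 0 := by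
    intro n hn
    rw [Finset.mem_Ioc] at hn
    rw [← Finset.sum_filter, Finset.mul_sum]
    have : (Finset.Icc 1 N).filter (· ∣ n) = n.divisors := by
      ext d
      simp only [Finset.mem_filter, Finset.mem_Icc, Nat.mem_divisors]
      constructor
      · rintro ⟨_, h⟩; exact ⟨h, by omega⟩
      · rintro ⟨h, _⟩
        exact ⟨⟨Nat.pos_of_dvd_of_pos h (by omega), (Nat.le_of_dvd (by omega) h).trans hn.2⟩, h⟩
    rw [this]
    exact Finset.sum_congr rfl fun d _ => mul_comm _ _
  rw [Finset.sum_congr rfl e, Finset.sum_comm]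
  calc _ ≤ ∑ d ∈ Finset.Icc 1 N, ((d : ℝ) ^ (3 / 2 : ℝ))⁻¹ * (2 / (M + 1)) := by
        refine Finset.sum_le_sum fun d hd => ?_
        have hd0 := (Finset.mem_Icc.1 hd).1
        have hd' : (0 : ℝ) < d := by exact_mod_cast hd0
        rw [← Finset.sum_filter, ← Finset.mul_sum]
        have e2 : ((d : ℝ) ^ (3 / 2 : ℝ)) = (d : ℝ) ^ (1 / 2 : ℝ) * d := by
          rw [← Real.rpow_add_one hd'.ne']; norm_num
        rw [e2, mul_inv, mul_assoc]
        gcongr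
        exact sum_multiples_inv_sq M N d hd0
    _ ≤ _ := by
        rw [← Finset.sum_mul]
        gcongr
        exact sum_le_Z32 _

/-- Second-moment bound: only `O(B / T)` integers `n > T B` have `φ(n) ≤ B`. -/
lemma tail_card (B T : ℝ) (hB : 0 < B) (hT : 0 < T) :
    (((Psi B).filter (fun n : ℕ => T * B < n)).card : ℝ) ≤ 8 * Z32 ^ 2 / T * B := by
  set S := (Psi B).filter (fun n : ℕ => T * B < n) with hS
  set M := ⌊T * B⌋₊
  set N := S.sup id
  have hZ := Z32_nonneg
  have hsub : S ⊆ Finset.Ioc M N := by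
    intro n hn
    refine Finset.mem_Ioc.2 ⟨?_, Finset.le_sup (f := id) hn⟩
    exact (Nat.floor_lt (by positivity)).2 (Finset.mem_filter.1 hn).2
  calc (S.card : ℝ) = ∑ n ∈ S, (1 : ℝ) := by simp
    _ ≤ ∑ n ∈ S, 4 * Z32 * B ^ 2 *
          (((n : ℝ) ^ 2)⁻¹ * ∑ d ∈ n.divisors, ((d : ℝ) ^ (1 / 2 : ℝ))⁻¹) := by
        refine Finset.sum_le_sum fun n hn => ?_
        obtain ⟨hn0, hnB⟩ := mem_Psi.1 (Finset.mem_filter.1 hn).1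
        have hn' : (0 : ℝ) < n := by exact_mod_cast hn0
        have h := sq_le_totient_sq n
        have h0 : 0 ≤ ∑ d ∈ n.divisors, ((d : ℝ) ^ (1 / 2 : ℝ))⁻¹ :=
          Finset.sum_nonneg fun _ _ => by positivity
        have h2 : (n : ℝ) ^ 2 ≤ 4 * Z32 * B ^ 2 *
            ∑ d ∈ n.divisors, ((d : ℝ) ^ (1 / 2 : ℝ))⁻¹ := h.trans (by gcongr)
        rw [mul_left_comm, ← div_eq_inv_mul, one_le_div (by positivity)]
        exact h2
    _ ≤ ∑ n ∈ Finset.Ioc M N, 4 * Z32 * B ^ 2 *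
          (((n : ℝ) ^ 2)⁻¹ * ∑ d ∈ n.divisors, ((d : ℝ) ^ (1 / 2 : ℝ))⁻¹) := by
        apply Finset.sum_le_sum_of_subset_of_nonneg hsub
        intro n _ _
        have h0 : 0 ≤ ∑ d ∈ n.divisors, ((d : ℝ) ^ (1 / 2 : ℝ))⁻¹ :=
          Finset.sum_nonneg fun _ _ => by positivity
        positivity
    _ ≤ 4 * Z32 * B ^ 2 * (Z32 * (2 / (M + 1))) := by
        rw [← Finset.mul_sum]
        gcongr
        exact tail_sum M N
    _ ≤ 4 * Z32 * B ^ 2 * (Z32 * (2 / (T * B))) := by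
        gcongr
        exact (Nat.lt_floor_add_one _).le
    _ = _ := by field_simp; ring

/-! ### Counting with a periodic weight -/

lemma abs_card_mod_sub (P X a : ℕ) (hP : 0 < P) (ha : a < P) :
    |(((Finset.Ioc 0 X).filter (fun n => n % P = a)).card : ℝ) - X / P| ≤ 1 := by
  have h := Nat.Ioc_filter_modEq_card 0 X hP a
  have e : (Finset.Ioc 0 X).filter (fun n => n % P = a) =
      (Finset.Ioc 0 X).filter (fun n => n ≡ a [MOD P]) := by
    refine Finset.filter_congr fun n _ => ?_
    rw [Nat.ModEq, Nat.mod_eq_of_lt ha]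
  rw [e]
  set k := ((Finset.Ioc 0 X).filter (fun n => n ≡ a [MOD P])).card
  have hPq : (0 : ℚ) < P := by exact_mod_cast hP
  have key : |(k : ℚ) - X / P| ≤ 1 := by
    have hk : (k : ℚ) = max ((⌊((X : ℚ) - a) / P⌋ : ℚ) - ⌊((0 : ℕ) - (a : ℚ)) / P⌋) 0 := by
      exact_mod_cast h
    have h1 := Int.floor_le (((X : ℚ) - a) / P)
    have h2 := Int.lt_floor_add_one (((X : ℚ) - a) / P)
    have h3 := Int.floor_le (((0 : ℕ) - (a : ℚ)) / P)
    have h4 := Int.lt_floor_add_one (((0 : ℕ) - (a : ℚ)) / P)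
    have h5 : ((X : ℚ) - a) / P - ((0 : ℕ) - (a : ℚ)) / P = X / P := by
      push_cast; ring
    have h6 : (0 : ℚ) ≤ X / P := by positivity
    rw [hk, abs_le]
    rcases max_cases ((⌊((X : ℚ) - a) / P⌋ : ℚ) - ⌊((0 : ℕ) - (a : ℚ)) / P⌋) 0 with ⟨h, h'⟩ | ⟨h, h'⟩
      <;> rw [h] <;> constructor <;> linarith
  have key' := (Rat.cast_le (K := ℝ)).2 key
  push_cast at key'
  exact key'

lemma tendsto_card_mod (P a : ℕ) (hP : 0 < P) (ha : a < P) (c : ℝ) (hc : 0 < c) :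
    Tendsto (fun B : ℝ => (((Finset.Ioc 0 ⌊c * B⌋₊).filter (fun n => n % P = a)).card : ℝ) / B)
      atTop (nhds (c / P)) := by
  have hf : Tendsto (fun B : ℝ => (⌊c * B⌋₊ : ℝ) / B / P) atTop (nhds (c / P)) :=
    (tendsto_nat_floor_mul_div_atTop hc.le).div_const _
  have h0 : Tendsto (fun B : ℝ => B⁻¹) atTop (nhds 0) := tendsto_inv_atTop_zero
  refine tendsto_of_tendsto_of_tendsto_of_le_of_le' (by simpa using hf.sub h0)
    (by simpa using hf.add h0) ?_ ?_
  all_goals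
    filter_upwards [eventually_gt_atTop 0] with B hB
    have h := abs_le.1 (abs_card_mod_sub P ⌊c * B⌋₊ a hP ha)
    have e : (⌊c * B⌋₊ : ℝ) / B / P = (⌊c * B⌋₊ / P : ℝ) / B := by ring
    rw [e, inv_eq_one_div]
  · rw [← sub_div]; gcongr; linarith
  · rw [← add_div]; gcongr; linarith

/-- The integers `n ≥ 1` with `n ≤ c(n) B`, for a weight `c` of period `P`, one residue class at a
time. -/
noncomputable def Q (c : ℕ → ℝ) (P : ℕ) (B : ℝ) : Finset ℕ :=
  (Finset.range P).biUnion fun a => (Finset.Ioc 0 ⌊c a * B⌋₊).filter (fun n => n % P = a)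

lemma mem_Q {c : ℕ → ℝ} {P : ℕ} (hP : 0 < P) (hper : ∀ n, c (n % P) = c n) {B : ℝ} {n : ℕ} :
    n ∈ Q c P B ↔ 0 < n ∧ (n : ℝ) ≤ c n * B := by
  simp only [Q, Finset.mem_biUnion, Finset.mem_range, Finset.mem_filter, Finset.mem_Ioc]
  constructor
  · rintro ⟨a, _, ⟨h0, h1⟩, rfl⟩
    rw [hper] at h1
    exact ⟨h0, (Nat.le_floor_iff' h0.ne').1 h1⟩
  · rintro ⟨h0, h1⟩
    refine ⟨n % P, Nat.mod_lt _ hP, ⟨h0, ?_⟩, rfl⟩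
    rw [hper]
    exact (Nat.le_floor_iff' h0.ne').2 h1

lemma tendsto_card_Q (c : ℕ → ℝ) (P : ℕ) (hP : 0 < P) (hc : ∀ n, 0 < c n) :
    Tendsto (fun B : ℝ => ((Q c P B).card : ℝ) / B) atTop
      (nhds ((∑ a ∈ Finset.range P, c a) / P)) := by
  have e : ∀ B : ℝ, ((Q c P B).card : ℝ) / B = ∑ a ∈ Finset.range P,
      (((Finset.Ioc 0 ⌊c a * B⌋₊).filter (fun n => n % P = a)).card : ℝ) / B := by
    intro B
    rw [Q, Finset.card_biUnion, Nat.cast_sum, Finset.sum_div]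
    intro a _ b _ hab
    rw [Function.onFun, Finset.disjoint_left]
    intro n hn hn'
    exact hab ((Finset.mem_filter.1 hn).2.symm.trans (Finset.mem_filter.1 hn').2)
  simp_rw [e]
  rw [Finset.sum_div]
  exact tendsto_finsetSum _ fun a ha => tendsto_card_mod P a hP (Finset.mem_range.1 ha) _ (hc a)

/-! ### The truncated ratio `φ(n)/n` -/

/-- The product of `1 - 1/p` over the primes `p ∈ S` dividing `n`. -/
noncomputable def W (S : Finset ℕ) (n : ℕ) : ℝ := ∏ p ∈ S, if p ∣ n then 1 - (p : ℝ)⁻¹ else 1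

lemma one_sub_inv_pos {p : ℕ} (hp : p.Prime) : (0 : ℝ) < 1 - (p : ℝ)⁻¹ := by
  have : (1 : ℝ) < p := by exact_mod_cast hp.one_lt
  have := inv_lt_one_of_one_lt₀ this
  linarith

lemma W_pos {S : Finset ℕ} (hS : ∀ p ∈ S, p.Prime) (n : ℕ) : 0 < W S n := by
  refine Finset.prod_pos fun p hp => ?_
  split_ifs
  · exact one_sub_inv_pos (hS p hp)
  · norm_num

lemma W_periodic (S : Finset ℕ) (n : ℕ) : W S (n % ∏ p ∈ S, p) = W S n := by
  refine Finset.prod_congr rfl fun p hp => ?_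
  simp only [Nat.dvd_mod_iff (Finset.dvd_prod_of_mem (fun q => q) hp)]

lemma card_range_dvd (P d : ℕ) (hd : 0 < d) (h : d ∣ P) :
    (((Finset.range P).filter (d ∣ ·)).card : ℝ) = P / d := by
  obtain ⟨k, rfl⟩ := h
  have e : (Finset.range (d * k)).filter (d ∣ ·) = (Finset.range k).image (d * ·) := by
    ext n
    simp only [Finset.mem_filter, Finset.mem_range, Finset.mem_image]
    constructor
    · rintro ⟨h, m, rfl⟩
      exact ⟨m, lt_of_mul_lt_mul_left h (Nat.zero_le d), rfl⟩
    · rintro ⟨m, h, rfl⟩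
      exact ⟨Nat.mul_lt_mul_of_pos_left h hd, dvd_mul_right _ _⟩
  rw [e, Finset.card_image_of_injective _ (fun a b h => Nat.eq_of_mul_eq_mul_left hd h),
    Finset.card_range]
  have : (d : ℝ) ≠ 0 := by positivity
  push_cast
  field_simp

/-- The mean of `1/W` over a period factors over the primes of `S`. -/
lemma mean_W_inv (S : Finset ℕ) (hS : ∀ p ∈ S, p.Prime) :
    (∑ a ∈ Finset.range (∏ p ∈ S, p), (W S a)⁻¹) / ((∏ p ∈ S, p : ℕ) : ℝ) =
      ∏ p ∈ S, (1 + ((p : ℝ) * (p - 1))⁻¹) := by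
  set P := ∏ p ∈ S, p with hPdef
  have hP : 0 < P := Finset.prod_pos fun p hp => (hS p hp).pos
  have hP' : (P : ℝ) ≠ 0 := by positivity
  have e : ∀ a : ℕ, (W S a)⁻¹ = ∑ t ∈ S.powerset,
      if (∏ p ∈ t, p) ∣ a then ∏ p ∈ t, ((p : ℝ) - 1)⁻¹ else 0 := by
    intro a
    have h1 : (W S a)⁻¹ = ∏ p ∈ S, (1 + if p ∣ a then ((p : ℝ) - 1)⁻¹ else 0) := by
      rw [W, ← Finset.prod_inv_distrib]
      refine Finset.prod_congr rfl fun p hp => ?_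
      split_ifs
      · have h1 : (1 : ℝ) < p := by exact_mod_cast (hS p hp).one_lt
        have h2 : (p : ℝ) - 1 ≠ 0 := by linarith
        have h3 : (p : ℝ) ≠ 0 := by linarith
        have h4 : 1 - (p : ℝ)⁻¹ = (p - 1) / p := by field_simp
        rw [h4]
        field_simp
        ring
      · simp
    rw [h1, Finset.prod_one_add]
    refine Finset.sum_congr rfl fun t ht => ?_
    have ht := Finset.mem_powerset.1 ht
    split_ifs with hd
    · refine Finset.prod_congr rfl fun p hp => ?_
      rw [if_pos ((Finset.dvd_prod_of_mem _ hp).trans hd)]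
    · have : ∃ p ∈ t, ¬ p ∣ a := by
        by_contra! hcon
        exact hd (Finset.prod_primes_dvd a (fun p hp => (hS p (ht hp)).prime) hcon)
      obtain ⟨p, hp, hpa⟩ := this
      exact Finset.prod_eq_zero hp (if_neg hpa)
  simp_rw [e]
  rw [Finset.sum_comm, Finset.sum_div, Finset.prod_one_add]
  refine Finset.sum_congr rfl fun t ht => ?_
  have ht := Finset.mem_powerset.1 ht
  have ht0 : 0 < ∏ p ∈ t, p := Finset.prod_pos fun p hp => (hS p (ht hp)).pos
  have ht0' : ((∏ p ∈ t, p : ℕ) : ℝ) ≠ 0 := by positivity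
  rw [← Finset.sum_filter, Finset.sum_const, nsmul_eq_mul,
    card_range_dvd P _ ht0 (Finset.prod_dvd_prod_of_subset _ _ _ ht)]
  simp_rw [mul_inv]
  rw [Finset.prod_mul_distrib, Finset.prod_inv_distrib (f := fun p : ℕ => (p : ℝ)), ← Nat.cast_prod]
  field_simp

/-! ### The Euler product of the constant -/

lemma tendsto_zetaR (k : ℕ) (hk : 2 ≤ k) :
    Tendsto (fun n : ℕ => ∏ p ∈ Nat.primesBelow n, (1 - ((p : ℝ) ^ k)⁻¹)⁻¹) atTop
      (nhds (zetaR k)) := by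
  have h := riemannZeta_eulerProduct (s := (k : ℂ)) (by simp; omega)
  have h2 := (Complex.continuous_re.tendsto _).comp h
  refine h2.congr fun n => ?_
  have : ∏ p ∈ Nat.primesBelow n, (1 - (p : ℂ) ^ (-(k : ℂ)))⁻¹ =
      ((∏ p ∈ Nat.primesBelow n, (1 - ((p : ℝ) ^ k)⁻¹)⁻¹ : ℝ) : ℂ) := by
    push_cast
    refine Finset.prod_congr rfl fun p _ => ?_
    rw [Complex.cpow_neg, Complex.cpow_natCast]
  simp only [Function.comp_apply, this, Complex.ofReal_re]

lemma zetaR_pos (k : ℕ) (hk : 2 ≤ k) : 0 < zetaR k := by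
  refine lt_of_lt_of_le one_pos (ge_of_tendsto' (tendsto_zetaR k hk) fun n => ?_)
  refine Finset.one_le_prod fun p hp => ?_
  have hp := Nat.prime_of_mem_primesBelow hp
  have h1 : (1 : ℝ) < p := by exact_mod_cast hp.one_lt
  have h2 : ((p : ℝ) ^ k)⁻¹ < 1 := inv_lt_one_of_one_lt₀ (one_lt_pow₀ h1 (by omega))
  have h3 : 0 < ((p : ℝ) ^ k)⁻¹ := by positivity
  exact (one_le_inv₀ (by linarith)).2 (by linarith)

/-- The constant `ζ(2) ζ(3) / ζ(6)`. -/
noncomputable def CC : ℝ := zetaR 2 * zetaR 3 / zetaR 6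

lemma tendsto_CC :
    Tendsto (fun n : ℕ => ∏ p ∈ Nat.primesBelow n, (1 + ((p : ℝ) * (p - 1))⁻¹)) atTop
      (nhds CC) := by
  have h := ((tendsto_zetaR 2 le_rfl).mul (tendsto_zetaR 3 (by norm_num))).div
    (tendsto_zetaR 6 (by norm_num)) (zetaR_pos 6 (by norm_num)).ne'
  refine h.congr fun n => ?_
  simp only [Pi.div_apply]
  rw [← Finset.prod_mul_distrib, ← Finset.prod_div_distrib]
  refine Finset.prod_congr rfl fun p hp => ?_
  have hp := Nat.prime_of_mem_primesBelow hp
  have h1 : (1 : ℝ) < p := by exact_mod_cast hp.one_lt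
  have h0 : (p : ℝ) ≠ 0 := by linarith
  have hm : (p : ℝ) - 1 ≠ 0 := by linarith
  have hk : ∀ k : ℕ, k ≠ 0 → (p : ℝ) ^ k - 1 ≠ 0 := fun k hk => by
    have := one_lt_pow₀ h1 hk
    linarith
  have e : ∀ k : ℕ, 1 - ((p : ℝ) ^ k)⁻¹ = (p ^ k - 1) / p ^ k := fun k => by field_simp
  have h2 := hk 2 (by norm_num)
  have h3 := hk 3 (by norm_num)
  have h6 := hk 6 (by norm_num)
  simp only [e, inv_div]
  field_simp
  ring

/-! ### The density of totient values -/

lemma totient_split (y n : ℕ) (hn : 0 < n) :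
    (Nat.totient n : ℝ) = n * W (Nat.primesBelow y) n *
      ∏ p ∈ n.primeFactors with ¬ p < y, (1 - (p : ℝ)⁻¹) := by
  have e : W (Nat.primesBelow y) n = ∏ p ∈ n.primeFactors with p < y, (1 - (p : ℝ)⁻¹) := by
    rw [W, ← Finset.prod_filter]
    refine Finset.prod_congr ?_ fun _ _ => rfl
    ext p
    simp only [Finset.mem_filter, Nat.mem_primesBelow, Nat.mem_primeFactors]
    constructor
    · rintro ⟨⟨h1, h2⟩, h3⟩; exact ⟨⟨h2, h3, hn.ne'⟩, h1⟩
    · rintro ⟨⟨h1, h2, _⟩, h3⟩; exact ⟨⟨h3, h1⟩, h2⟩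
  rw [e, mul_assoc, Finset.prod_filter_mul_prod_filter_not, totient_real]

lemma one_sub_sum_le (s : Finset ℕ) (f : ℕ → ℝ) (h0 : ∀ i ∈ s, 0 ≤ f i) (h1 : ∀ i ∈ s, f i ≤ 1) :
    1 - ∑ i ∈ s, f i ≤ ∏ i ∈ s, (1 - f i) := by
  induction s using Finset.cons_induction with
  | empty => simp
  | cons a s ha ih =>
    rw [Finset.sum_cons, Finset.prod_cons]
    have ih := ih (fun i hi => h0 i (Finset.mem_cons_of_mem hi))
      (fun i hi => h1 i (Finset.mem_cons_of_mem hi))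
    have ha0 := h0 a (Finset.mem_cons_self a s)
    have ha1 := h1 a (Finset.mem_cons_self a s)
    have hs : 0 ≤ ∑ i ∈ s, f i :=
      Finset.sum_nonneg fun i hi => h0 i (Finset.mem_cons_of_mem hi)
    nlinarith [mul_le_mul_of_nonneg_left ih (sub_nonneg.2 ha1), mul_nonneg ha0 hs]

/-- The integers `n ≤ X` for which the reciprocals of the prime factors `≥ y` sum to more
than `ε`. -/
noncomputable def Bad (y : ℕ) (ε : ℝ) (X : ℕ) : Finset ℕ :=
  (Finset.Ioc 0 X).filter fun n => ε < ∑ p ∈ n.primeFactors with ¬ p < y, (p : ℝ)⁻¹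

/-- First-moment bound for the influence of the primes `≥ y`. -/
lemma bad_card (y : ℕ) (hy : 0 < y) (ε : ℝ) (hε : 0 < ε) (X : ℕ) :
    ((Bad y ε X).card : ℝ) ≤ 2 / (ε * y) * X := by
  have hy' : (0 : ℝ) < y := by exact_mod_cast hy
  have h : ε * (Bad y ε X).card ≤ X * (2 / y) := by
    calc ε * (Bad y ε X).card = ∑ n ∈ Bad y ε X, ε := by simp [mul_comm]
      _ ≤ ∑ n ∈ Bad y ε X, ∑ p ∈ n.primeFactors with ¬ p < y, (p : ℝ)⁻¹ :=
          Finset.sum_le_sum fun n hn => (Finset.mem_filter.1 hn).2.le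
      _ ≤ ∑ n ∈ Finset.Ioc 0 X, ∑ p ∈ n.primeFactors with ¬ p < y, (p : ℝ)⁻¹ := by
          apply Finset.sum_le_sum_of_subset_of_nonneg (Finset.filter_subset _ _)
          intros
          exact Finset.sum_nonneg fun _ _ => by positivity
      _ ≤ ∑ n ∈ Finset.Ioc 0 X, ∑ p ∈ Finset.Ioo (y - 1) (X + 1),
            if p ∣ n then (p : ℝ)⁻¹ else 0 := by
          refine Finset.sum_le_sum fun n hn => ?_
          rw [← Finset.sum_filter]
          apply Finset.sum_le_sum_of_subset_of_nonneg
          · intro p hp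
            obtain ⟨hp, hpy⟩ := Finset.mem_filter.1 hp
            have h1 := Nat.le_of_mem_primeFactors hp
            have h2 := (Finset.mem_Ioc.1 hn).2
            exact Finset.mem_filter.2 ⟨Finset.mem_Ioo.2 ⟨by omega, by omega⟩,
              Nat.dvd_of_mem_primeFactors hp⟩
          · intros; positivity
      _ = ∑ p ∈ Finset.Ioo (y - 1) (X + 1), (X / p : ℕ) * (p : ℝ)⁻¹ := by
          rw [Finset.sum_comm]
          refine Finset.sum_congr rfl fun p _ => ?_
          rw [← Finset.sum_filter, Finset.sum_const, nsmul_eq_mul,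
            Nat.Ioc_filter_dvd_card_eq_div]
      _ ≤ ∑ p ∈ Finset.Ioo (y - 1) (X + 1), X * ((p : ℝ) ^ 2)⁻¹ := by
          refine Finset.sum_le_sum fun p _ => ?_
          have : ((X / p : ℕ) : ℝ) ≤ X / p := Nat.cast_div_le
          calc ((X / p : ℕ) : ℝ) * (p : ℝ)⁻¹ ≤ X / p * (p : ℝ)⁻¹ := by gcongr
            _ = _ := by rw [div_eq_mul_inv, mul_assoc, ← mul_inv, sq]
      _ ≤ X * (2 / y) := by
          rw [← Finset.mul_sum]
          gcongr
          refine (sum_Ioo_inv_sq_le _ _).trans (le_of_eq ?_)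
          rw [Nat.cast_sub hy]
          simp
  rw [← le_div_iff₀' hε] at h
  refine h.trans (le_of_eq ?_)
  field_simp

/-- The weight `1 / W` for the primes below `y`. -/
noncomputable def cw (y : ℕ) (n : ℕ) : ℝ := (W (Nat.primesBelow y) n)⁻¹

/-- The period of `cw y`. -/
def per (y : ℕ) : ℕ := ∏ p ∈ Nat.primesBelow y, p

lemma per_pos (y : ℕ) : 0 < per y :=
  Finset.prod_pos fun _ hp => (Nat.prime_of_mem_primesBelow hp).pos

lemma cw_pos (y n : ℕ) : 0 < cw y n :=
  inv_pos.2 (W_pos (fun _ hp => Nat.prime_of_mem_primesBelow hp) n)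

lemma mem_Q_cw {y n : ℕ} {B : ℝ} :
    n ∈ Q (cw y) (per y) B ↔ 0 < n ∧ n * W (Nat.primesBelow y) n ≤ B := by
  rw [mem_Q (per_pos y) (fun n => by rw [cw, per, W_periodic, cw])]
  have hW := W_pos (S := Nat.primesBelow y) (fun _ hp => Nat.prime_of_mem_primesBelow hp) n
  rw [cw, ← div_eq_inv_mul, le_div_iff₀ hW]

/-- The partial Euler product of `CC` over the primes below `y`. -/
noncomputable def CP (y : ℕ) : ℝ := ∏ p ∈ Nat.primesBelow y, (1 + ((p : ℝ) * (p - 1))⁻¹)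

lemma tendsto_card_Q_cw (y : ℕ) :
    Tendsto (fun B : ℝ => ((Q (cw y) (per y) B).card : ℝ) / B) atTop (nhds (CP y)) := by
  have h := tendsto_card_Q (cw y) (per y) (per_pos y) (cw_pos y)
  rw [CP, ← mean_W_inv _ (fun _ hp => Nat.prime_of_mem_primesBelow hp)]
  exact h

lemma prime_inv_mem {n p : ℕ} (hp : p ∈ n.primeFactors) : 0 ≤ (p : ℝ)⁻¹ ∧ (p : ℝ)⁻¹ ≤ 1 :=
  ⟨by positivity, by linarith [one_sub_inv_pos (Nat.prime_of_mem_primeFactors hp)]⟩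

lemma Q_subset_Psi (y : ℕ) (B : ℝ) : Q (cw y) (per y) B ⊆ Psi B := by
  intro n hn
  obtain ⟨h0, h1⟩ := mem_Q_cw.1 hn
  refine mem_Psi.2 ⟨h0, ?_⟩
  rw [totient_split y n h0]
  refine le_trans (mul_le_of_le_one_right ?_ ?_) h1
  · exact mul_nonneg (Nat.cast_nonneg n)
      (W_pos (fun _ hp => Nat.prime_of_mem_primesBelow hp) n).le
  · refine Finset.prod_le_one (fun p hp => ?_) (fun p hp => ?_)
    · linarith [(prime_inv_mem (Finset.mem_filter.1 hp).1).2]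
    · linarith [(prime_inv_mem (Finset.mem_filter.1 hp).1).1]

lemma Psi_subset (y : ℕ) (ε B T : ℝ) (hε : ε < 1) :
    Psi B ⊆ Q (cw y) (per y) (B / (1 - ε)) ∪ (Bad y ε ⌊T * B⌋₊ ∪
      (Psi B).filter (fun n : ℕ => T * B < n)) := by
  intro n hn
  obtain ⟨h0, h1⟩ := mem_Psi.1 hn
  rw [Finset.mem_union, Finset.mem_union]
  by_cases hT : T * B < n
  · exact Or.inr (Or.inr (Finset.mem_filter.2 ⟨hn, hT⟩))
  by_cases hb : ε < ∑ p ∈ n.primeFactors with ¬ p < y, (p : ℝ)⁻¹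
  · exact Or.inr (Or.inl (Finset.mem_filter.2
      ⟨Finset.mem_Ioc.2 ⟨h0, Nat.le_floor (not_lt.1 hT)⟩, hb⟩))
  left
  refine mem_Q_cw.2 ⟨h0, ?_⟩
  rw [le_div_iff₀ (by linarith)]
  refine le_trans ?_ h1
  rw [totient_split y n h0]
  have hW := W_pos (S := Nat.primesBelow y) (fun _ hp => Nat.prime_of_mem_primesBelow hp) n
  gcongr
  refine le_trans ?_ (one_sub_sum_le _ _ (fun p hp => ?_) (fun p hp => ?_))
  · linarith
  · exact (prime_inv_mem (Finset.mem_filter.1 hp).1).1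
  · exact (prime_inv_mem (Finset.mem_filter.1 hp).1).2

/-- Bateman's theorem: the number of `n` with `φ(n) ≤ B` is asymptotic to
`ζ(2) ζ(3) / ζ(6) * B`. -/
theorem tendsto_card_Psi :
    Tendsto (fun B : ℝ => ((Psi B).card : ℝ) / B) atTop (nhds CC) := by
  rw [tendsto_order]
  constructor
  · intro a ha
    obtain ⟨y, hy⟩ := (tendsto_CC.eventually (lt_mem_nhds ha)).exists
    filter_upwards [(tendsto_card_Q_cw y).eventually (lt_mem_nhds hy), eventually_gt_atTop 0]
      with B hB hB0
    refine hB.trans_le ?_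
    gcongr
    exact Q_subset_Psi y B
  · intro a ha
    -- the parameters are `y = k ^ 4`, `T = k` and `ε = 1 / k`
    have hk : Tendsto (fun k : ℕ => CP (k ^ 4) / (1 - (k : ℝ)⁻¹) +
        (2 * (k : ℝ)⁻¹ ^ 2 + 8 * Z32 ^ 2 * (k : ℝ)⁻¹)) atTop (nhds CC) := by
      have hinv : Tendsto (fun k : ℕ => (k : ℝ)⁻¹) atTop (nhds 0) :=
        tendsto_inv_atTop_zero.comp tendsto_natCast_atTop_atTop
      have h1 : Tendsto (fun k : ℕ => CP (k ^ 4)) atTop (nhds CC) :=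
        tendsto_CC.comp (tendsto_pow_atTop (by norm_num))
      have h2 := (h1.div (hinv.const_sub 1) (by norm_num)).add
        (((hinv.pow 2).const_mul 2).add (hinv.const_mul (8 * Z32 ^ 2)))
      simpa using h2
    obtain ⟨k, hka, hk2⟩ := ((hk.eventually (gt_mem_nhds ha)).and (eventually_ge_atTop 2)).exists
    have hk0 : (2 : ℝ) ≤ k := by exact_mod_cast hk2
    have hε : (k : ℝ)⁻¹ < 1 := inv_lt_one_of_one_lt₀ (by linarith)
    have hε' : 0 < 1 - (k : ℝ)⁻¹ := by linarith
    have hQ : Tendsto (fun B : ℝ => ((Q (cw (k ^ 4)) (per (k ^ 4)) (B / (1 - (k : ℝ)⁻¹))).card : ℝ)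
        / B) atTop (nhds (CP (k ^ 4) / (1 - (k : ℝ)⁻¹))) := by
      have h := ((tendsto_card_Q_cw (k ^ 4)).comp
        (tendsto_id.atTop_div_const hε')).div_const (1 - (k : ℝ)⁻¹)
      refine h.congr fun B => ?_
      simp only [Function.comp_apply, id]
      rw [div_div, div_mul_cancel₀ _ hε'.ne']
    have hU := (hQ.add_const (2 * (k : ℝ)⁻¹ ^ 2 + 8 * Z32 ^ 2 * (k : ℝ)⁻¹)).eventually
      (gt_mem_nhds hka)
    filter_upwards [hU, eventually_gt_atTop 0] with B hB hB0
    refine lt_of_le_of_lt ?_ hB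
    rw [div_add' _ _ _ hB0.ne', div_le_div_iff_of_pos_right hB0]
    have h1 := Finset.card_le_card (Psi_subset (k ^ 4) (k : ℝ)⁻¹ B k hε)
    have h2 := h1.trans ((Finset.card_union_le _ _).trans
      (Nat.add_le_add_left (Finset.card_union_le _ _) _))
    have h3 := tail_card B k hB0 (by linarith)
    have h4 := bad_card (k ^ 4) (by positivity) (k : ℝ)⁻¹ (by positivity) ⌊k * B⌋₊
    have h5 : (2 / ((k : ℝ)⁻¹ * (k ^ 4 : ℕ)) * ⌊k * B⌋₊ : ℝ) ≤ 2 * (k : ℝ)⁻¹ ^ 2 * B :=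
      calc (2 / ((k : ℝ)⁻¹ * (k ^ 4 : ℕ)) * ⌊k * B⌋₊ : ℝ)
          ≤ 2 / ((k : ℝ)⁻¹ * (k ^ 4 : ℕ)) * (k * B) := by
            gcongr
            exact Nat.floor_le (by positivity)
        _ = _ := by push_cast; field_simp
    have h6 : (8 * Z32 ^ 2 / k * B : ℝ) = 8 * Z32 ^ 2 * (k : ℝ)⁻¹ * B := by ring
    have h7 : ((Psi B).card : ℝ) ≤ (Q (cw (k ^ 4)) (per (k ^ 4)) (B / (1 - (k : ℝ)⁻¹))).card +
        ((Bad (k ^ 4) (k : ℝ)⁻¹ ⌊k * B⌋₊).card +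
          ((Psi B).filter (fun n : ℕ => k * B < n)).card) := by exact_mod_cast h2
    rw [add_mul]
    linarith

/-! ### Partial summation -/

/-- The sum of `φ(n)` over `Ψ_B`. -/
noncomputable def SS (B : ℝ) : ℝ := ∑ n ∈ Psi B, (Nat.totient n : ℝ)

/-- Partial summation: `n ∈ Ψ_M` lies in `Ψ_k` for exactly `M - φ(n)` integers `k < M`. -/
lemma sum_card_Psi (M : ℕ) :
    ∑ k ∈ Finset.range M, ((Psi k).card : ℝ) = M * (Psi M).card - SS M := by
  have e : ∀ k ∈ Finset.range M, ((Psi k).card : ℝ) =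
      ∑ n ∈ Psi M, if Nat.totient n ≤ k then 1 else 0 := by
    intro k hk
    have hk' : (k : ℝ) ≤ M := by exact_mod_cast (Finset.mem_range.1 hk).le
    have : Psi (k : ℝ) = (Psi M).filter (fun n => Nat.totient n ≤ k) := by
      ext n
      rw [Finset.mem_filter, mem_Psi, mem_Psi, Nat.cast_le, Nat.cast_le]
      have := (Finset.mem_range.1 hk).le
      constructor
      · rintro ⟨h0, h1⟩; exact ⟨⟨h0, h1.trans this⟩, h1⟩
      · rintro ⟨⟨h0, _⟩, h1⟩; exact ⟨h0, h1⟩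
    rw [this, ← Finset.sum_filter]
    simp
  rw [Finset.sum_congr rfl e, Finset.sum_comm, SS]
  have e2 : ∀ n ∈ Psi M, (∑ k ∈ Finset.range M, if Nat.totient n ≤ k then (1 : ℝ) else 0) =
      M - Nat.totient n := by
    intro n hn
    have h : Nat.totient n ≤ M := by exact_mod_cast (mem_Psi.1 hn).2
    have : (Finset.range M).filter (fun k => Nat.totient n ≤ k) =
        Finset.Ico (Nat.totient n) M := by
      ext k; simp [and_comm]
    rw [← Finset.sum_filter, this]
    simp [Nat.cast_sub h]
  rw [Finset.sum_congr rfl e2, Finset.sum_sub_distrib]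
  simp [mul_comm]

lemma sum_range_real (M : ℕ) : ∑ k ∈ Finset.range M, (k : ℝ) = M * (M - 1) / 2 := by
  induction M with
  | zero => simp
  | succ n ih => rw [Finset.sum_range_succ, ih]; push_cast; ring

lemma tendsto_SS_nat : Tendsto (fun M : ℕ => SS M / (M : ℝ) ^ 2) atTop (nhds (CC / 2)) := by
  have hN : Tendsto (fun M : ℕ => ((Psi M).card : ℝ) / M) atTop (nhds CC) :=
    tendsto_card_Psi.comp tendsto_natCast_atTop_atTop
  have ho : (fun k : ℕ => ((Psi k).card : ℝ) - CC * k) =o[atTop] (fun k : ℕ => (k : ℝ)) := by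
    rw [Asymptotics.isLittleO_iff_tendsto']
    · have h := hN.sub_const CC
      rw [sub_self] at h
      refine h.congr' ?_
      filter_upwards [eventually_gt_atTop 0] with k hk
      have : (k : ℝ) ≠ 0 := by positivity
      field_simp
    · filter_upwards [eventually_gt_atTop 0] with k hk h
      exact absurd h (by positivity)
  have hsum_top : Tendsto (fun n : ℕ => ∑ i ∈ Finset.range n, (i : ℝ)) atTop atTop := by
    refine tendsto_atTop_mono' _ ?_ (tendsto_natCast_atTop_atTop.atTop_div_const two_pos)
    filter_upwards [eventually_ge_atTop 2] with n hn
    have : (2 : ℝ) ≤ n := by exact_mod_cast hn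
    rw [sum_range_real]
    gcongr
    nlinarith
  have hs := ho.sum_range (fun k => Nat.cast_nonneg k) hsum_top
  have hO : (fun n : ℕ => ∑ i ∈ Finset.range n, (i : ℝ)) =O[atTop] (fun n : ℕ => (n : ℝ) ^ 2) := by
    refine Asymptotics.IsBigO.of_bound 1 (Eventually.of_forall fun n => ?_)
    rw [Real.norm_of_nonneg (Finset.sum_nonneg fun _ _ => Nat.cast_nonneg _),
      Real.norm_of_nonneg (by positivity), sum_range_real]
    nlinarith [Nat.cast_nonneg (α := ℝ) n]
  have h0 := (hs.trans_isBigO hO).tendsto_div_nhds_zero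
  have hinv : Tendsto (fun k : ℕ => (k : ℝ)⁻¹) atTop (nhds 0) :=
    tendsto_inv_atTop_zero.comp tendsto_natCast_atTop_atTop
  have hfin := (hN.sub h0).sub ((hinv.const_sub 1).const_mul (CC / 2))
  have e : CC - 0 - CC / 2 * (1 - 0) = CC / 2 := by ring
  rw [e] at hfin
  refine hfin.congr' ?_
  filter_upwards [eventually_gt_atTop 0] with M hM
  have : (M : ℝ) ≠ 0 := by positivity
  rw [Finset.sum_sub_distrib, ← Finset.mul_sum, sum_range_real, sum_card_Psi]
  field_simp
  ring

lemma Psi_floor (B : ℝ) (hB : 0 ≤ B) : Psi (⌊B⌋₊ : ℝ) = Psi B := by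
  ext n
  rw [mem_Psi, mem_Psi, Nat.cast_le, Nat.le_floor_iff hB]

lemma tendsto_SS : Tendsto (fun B : ℝ => SS B / B ^ 2) atTop (nhds (CC / 2)) := by
  have h := (tendsto_SS_nat.comp tendsto_nat_floor_atTop).mul
    ((tendsto_nat_floor_div_atTop (R := ℝ)).pow 2)
  rw [one_pow, mul_one] at h
  refine h.congr' ?_
  filter_upwards [eventually_ge_atTop 1] with B hB
  have h1 : (0 : ℝ) < ⌊B⌋₊ := by exact_mod_cast Nat.floor_pos.2 hB
  have h2 : SS (⌊B⌋₊ : ℝ) = SS B := by rw [SS, SS, Psi_floor B (by linarith)]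
  simp only [Function.comp_apply, h2]
  field_simp

/-! ### Inserting the logarithm -/

/-- The sum of `φ(n) log n` over `Ψ_B`. -/
noncomputable def TT (B : ℝ) : ℝ := ∑ n ∈ Psi B, (Nat.totient n : ℝ) * Real.log n

/-- On `Ψ_B`, `log n` exceeds `log B` by at most the factor `1 / (1 - ε)` and a constant. -/
lemma TT_upper (ε : ℝ) (h1 : ε < 1) (K : ℝ)
    (hK : ∀ n : ℕ, 0 < n → (1 - ε) * Real.log n ≤ Real.log (Nat.totient n) + K) (B : ℝ) :
    TT B ≤ (Real.log B + K) / (1 - ε) * SS B := by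
  rw [TT, SS, Finset.mul_sum]
  refine Finset.sum_le_sum fun n hn => ?_
  obtain ⟨h0, hB⟩ := mem_Psi.1 hn
  have hφ : (0 : ℝ) < Nat.totient n := by exact_mod_cast Nat.totient_pos.2 h0
  rw [mul_comm]
  gcongr
  rw [le_div_iff₀' (by linarith)]
  linarith [hK n h0, Real.log_le_log hφ hB]

/-- The terms with `δ B < φ(n) ≤ B` have `log n ≥ log φ(n) ≥ log (δ B)`. -/
lemma TT_lower (δ B : ℝ) (hδ : δ ≤ 1) (hB : 1 ≤ δ * B) (hB0 : 0 ≤ B) :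
    Real.log (δ * B) * (SS B - SS (δ * B)) ≤ TT B := by
  have hsub : Psi (δ * B) ⊆ Psi B := fun n hn => by
    obtain ⟨h0, h1⟩ := mem_Psi.1 hn
    exact mem_Psi.2 ⟨h0, h1.trans (mul_le_of_le_one_left hB0 hδ)⟩
  have e : SS B - SS (δ * B) = ∑ n ∈ Psi B \ Psi (δ * B), (Nat.totient n : ℝ) := by
    rw [SS, SS, ← Finset.sum_sdiff hsub]; ring
  rw [e, Finset.mul_sum, TT]
  refine le_trans (Finset.sum_le_sum (g := fun n => (Nat.totient n : ℝ) * Real.log n)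
    fun n hn => ?_) (Finset.sum_le_sum_of_subset_of_nonneg Finset.sdiff_subset fun n _ _ => ?_)
  · obtain ⟨hn1, hn2⟩ := Finset.mem_sdiff.1 hn
    have h0 := (mem_Psi.1 hn1).1
    have h1 : δ * B < Nat.totient n := by
      by_contra hcon
      exact hn2 (mem_Psi.2 ⟨h0, not_lt.1 hcon⟩)
    have h2 : (Nat.totient n : ℝ) ≤ n := by exact_mod_cast Nat.totient_le n
    rw [mul_comm]
    gcongr
    linarith
  · exact mul_nonneg (Nat.cast_nonneg _) (Real.log_natCast_nonneg n)

lemma tendsto_log_mul (c : ℝ) (hc : 0 < c) :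
    Tendsto (fun B : ℝ => Real.log (c * B) / Real.log B) atTop (nhds 1) := by
  have h : Tendsto (fun B : ℝ => Real.log c / Real.log B + 1) atTop (nhds (0 + 1)) :=
    (Real.tendsto_log_atTop.const_div_atTop (Real.log c)).add_const 1
  rw [zero_add] at h
  refine h.congr' ?_
  filter_upwards [eventually_gt_atTop 1] with B hB
  have := Real.log_pos hB
  rw [Real.log_mul hc.ne' (by linarith), add_div, div_self this.ne']

lemma tendsto_TT :
    Tendsto (fun B : ℝ => TT B / (B ^ 2 * Real.log B)) atTop (nhds (CC / 2)) := by
  have hinv : Tendsto (fun k : ℕ => (k : ℝ)⁻¹) atTop (nhds 0) :=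
    tendsto_inv_atTop_zero.comp tendsto_natCast_atTop_atTop
  rw [tendsto_order]
  constructor
  · intro a ha
    have hk : Tendsto (fun k : ℕ => 1 * (CC / 2 - (k : ℝ)⁻¹ ^ 2 * (CC / 2))) atTop
        (nhds (CC / 2)) := by
      simpa using (((hinv.pow 2).mul_const (CC / 2)).const_sub (CC / 2)).const_mul 1
    obtain ⟨k, hka, hk2⟩ := ((hk.eventually (lt_mem_nhds ha)).and (eventually_ge_atTop 2)).exists
    have hk0 : (2 : ℝ) ≤ k := by exact_mod_cast hk2
    have hδ : 0 < (k : ℝ)⁻¹ := by positivity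
    have hδ1 : (k : ℝ)⁻¹ < 1 := inv_lt_one_of_one_lt₀ (by linarith)
    have htop : Tendsto (fun B : ℝ => (k : ℝ)⁻¹ * B) atTop atTop :=
      tendsto_id.const_mul_atTop hδ
    have hlim := (tendsto_log_mul _ hδ).mul
      (tendsto_SS.sub ((tendsto_SS.comp htop).const_mul ((k : ℝ)⁻¹ ^ 2)))
    filter_upwards [hlim.eventually (lt_mem_nhds hka), htop.eventually_ge_atTop 1,
      eventually_gt_atTop 1] with B hB hB1 hB2
    refine hB.trans_le ?_
    have hlog := Real.log_pos hB2
    have hB0 : (0 : ℝ) < B := by linarith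
    have h := TT_lower _ B hδ1.le hB1 hB0.le
    rw [le_div_iff₀ (by positivity)]
    refine le_trans (le_of_eq ?_) h
    simp only [Function.comp_apply]
    field_simp
  · intro a ha
    have hk : Tendsto (fun k : ℕ => 1 / (1 - (k : ℝ)⁻¹) * (CC / 2)) atTop (nhds (CC / 2)) := by
      have := ((tendsto_const_nhds (x := (1 : ℝ))).div (hinv.const_sub 1) (by norm_num)).mul_const (CC / 2)
      simpa using this
    obtain ⟨k, hka, hk2⟩ := ((hk.eventually (gt_mem_nhds ha)).and (eventually_ge_atTop 2)).exists
    have hk0 : (2 : ℝ) ≤ k := by exact_mod_cast hk2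
    have hε : 0 < (k : ℝ)⁻¹ := by positivity
    have hε1 : (k : ℝ)⁻¹ < 1 := inv_lt_one_of_one_lt₀ (by linarith)
    obtain ⟨K, _, hK⟩ := log_le_totient _ hε
    have hlim := ((tendsto_log_mul _ (Real.exp_pos K)).div_const (1 - (k : ℝ)⁻¹)).mul tendsto_SS
    filter_upwards [hlim.eventually (gt_mem_nhds hka), eventually_gt_atTop 1] with B hB hB2
    refine lt_of_le_of_lt ?_ hB
    have hlog := Real.log_pos hB2
    have hB0 : (0 : ℝ) < B := by linarith
    have h := TT_upper _ hε1 K hK B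
    rw [div_le_iff₀ (by positivity)]
    refine h.trans (le_of_eq ?_)
    rw [Real.log_mul (Real.exp_pos K).ne' hB0.ne', Real.log_exp]
    have : 1 - (k : ℝ)⁻¹ ≠ 0 := by linarith
    generalize 1 - (k : ℝ)⁻¹ = w at this
    field_simp
    ring

/-- For every fixed positive rational `r`, the major arithmetic factor
`A₁(B) = ∏_{b ∈ Ψ_B} b^{(2r+1)φ(b)}` satisfies
`log A₁(B) = (½·ζ(2)ζ(3)/ζ(6) + o(1))·(2r+1)·B²·log B` as `B → ∞`;
here `log A₁(B) = (2r+1)·∑_{b ∈ Ψ_B} φ(b)·log b`. -/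
theorem log_A1_asymptotic (r : ℚ) (hr : 0 < r) :
    Tendsto
      (fun B : ℝ =>
        ((2 * (r : ℝ) + 1) * ∑ᶠ b ∈ PsiSet B, (Nat.totient b : ℝ) * Real.log b) /
          (B ^ 2 * Real.log B))
      atTop (nhds ((2 * (r : ℝ) + 1) * (zetaR 2 * zetaR 3 / (2 * zetaR 6)))) := by
  have h := tendsto_TT.const_mul (2 * (r : ℝ) + 1)
  have e : CC / 2 = zetaR 2 * zetaR 3 / (2 * zetaR 6) := by
    rw [CC, div_div, mul_comm (zetaR 6)]
  rw [e] at h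
  refine h.congr fun B => ?_
  rw [finsum_mem_eq_finite_toFinset_sum _ (PsiSet_finite B), mul_div_assoc]
  rfl
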